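/- For all ε > 0 and Δ > 0, V* = inf_{μ ∈ ⋃_{i≥1} 𝒫_i^{(a)}} V(μ); that is, in minimizing the expected ℓ¹ cost one may restrict to measures whose layer-constant density sequence is monotonically nonincreasing. (Lemma 4.) -/

import Mathlib

open MeasureTheory Real Filter
open scoped ENNReal Topology

noncomputable section

/-- The ℓ¹ norm on ℝ². -/
def l1 (x : ℝ × ℝ) : ℝ := |x.1| + |x.2|

/-- The ε-differential-privacy constraint on a measure on ℝ² with sensitivity Δ. -/
def DPC (ε Δ : ℝ) (μ : Measure (ℝ × ℝ)) : Prop :=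
  ∀ S : Set (ℝ × ℝ), MeasurableSet S → ∀ t : ℝ × ℝ, l1 t ≤ Δ →
    μ S ≤ ENNReal.ofReal (Real.exp ε) * μ ((· + t) '' S)

/-- Expected ℓ¹ cost of a noise distribution. -/
def cost (μ : Measure (ℝ × ℝ)) : ℝ≥0∞ := ∫⁻ x, ENNReal.ofReal (l1 x) ∂μ

/-- The index k of the ℓ¹ layer A_i(k) = {x : kΔ/i ≤ ‖x‖₁ < (k+1)Δ/i} containing x. -/
def layerIdx (Δ : ℝ) (i : ℕ) (x : ℝ × ℝ) : ℕ := ⌊l1 x * i / Δ⌋₊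

/-- μ has a density w.r.t. Lebesgue measure which is constant on each ℓ¹ layer
A_i(k), with constant value a_k on A_i(k); (a_k) is the density sequence of μ. -/
def HasDensitySeq (Δ : ℝ) (i : ℕ) (μ : Measure (ℝ × ℝ)) (a : ℕ → ℝ≥0∞) : Prop :=
  μ = MeasureTheory.volume.withDensity (fun x => a (layerIdx Δ i x))

/-- Membership in 𝒫: probability measures satisfying the ε-DP constraint. -/
def MemP (ε Δ : ℝ) (μ : Measure (ℝ × ℝ)) : Prop :=
  IsProbabilityMeasure μ ∧ DPC ε Δ μ

/-- Membership in 𝒫_{i,sym}: members of 𝒫 with layer-constant density. -/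
def MemPsym (ε Δ : ℝ) (i : ℕ) (μ : Measure (ℝ × ℝ)) : Prop :=
  MemP ε Δ μ ∧ ∃ a : ℕ → ℝ≥0∞, HasDensitySeq Δ i μ a

/-- Membership in 𝒫_i^{(a)}: layer-constant density with nonincreasing density sequence. -/
def MemPa (ε Δ : ℝ) (i : ℕ) (μ : Measure (ℝ × ℝ)) : Prop :=
  MemP ε Δ μ ∧ ∃ a : ℕ → ℝ≥0∞, HasDensitySeq Δ i μ a ∧ Antitone a

/-- Membership in 𝒫_i^{(b)}: additionally the density sequence decays geometrically,
a_k = e^ε · a_{k+i} for all k. -/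
def MemPb (ε Δ : ℝ) (i : ℕ) (μ : Measure (ℝ × ℝ)) : Prop :=
  MemP ε Δ μ ∧ ∃ a : ℕ → ℝ≥0∞, HasDensitySeq Δ i μ a ∧ Antitone a ∧
    ∀ k : ℕ, a k = ENNReal.ofReal (Real.exp ε) * a (k + i)

/-- Membership in 𝒫_i^{(c)}: additionally a₀ = e^ε · a_{i−1} and
a₀ = a₁ = ⋯ = a_k for some 0 ≤ k ≤ i−2. -/
def MemPc (ε Δ : ℝ) (i : ℕ) (μ : Measure (ℝ × ℝ)) : Prop :=
  MemP ε Δ μ ∧ ∃ a : ℕ → ℝ≥0∞, HasDensitySeq Δ i μ a ∧ Antitone a ∧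
    (∀ k : ℕ, a k = ENNReal.ofReal (Real.exp ε) * a (k + i)) ∧
    a 0 = ENNReal.ofReal (Real.exp ε) * a (i - 1) ∧
    ∃ k : ℕ, k ≤ i - 2 ∧ ∀ j : ℕ, j ≤ k → a j = a 0

/-- Membership in 𝒫_i^{(d)}: members of 𝒫_i^{(c)} whose density sequence takes only
the two values a₀ and a_{i−1} on each period: for some 1 ≤ k ≤ i−2, a_j = a₀ for
0 ≤ j < k and a_j = a_{i−1} for k < j ≤ i−1. -/
def MemPd (ε Δ : ℝ) (i : ℕ) (μ : Measure (ℝ × ℝ)) : Prop :=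
  MemP ε Δ μ ∧ ∃ a : ℕ → ℝ≥0∞, HasDensitySeq Δ i μ a ∧ Antitone a ∧
    (∀ k : ℕ, a k = ENNReal.ofReal (Real.exp ε) * a (k + i)) ∧
    a 0 = ENNReal.ofReal (Real.exp ε) * a (i - 1) ∧
    (∃ k : ℕ, k ≤ i - 2 ∧ ∀ j : ℕ, j ≤ k → a j = a 0) ∧
    ∃ k : ℕ, 1 ≤ k ∧ k ≤ i - 2 ∧ (∀ j : ℕ, j < k → a j = a 0) ∧
      ∀ j : ℕ, k < j → j ≤ i - 1 → a j = a (i - 1)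


section aux
open Finset in
lemma row_card (A : Finset (ℤ × ℤ)) (i : ℕ) :
    A.card + 2 * i * (A.image Prod.snd).card ≤
      ((A ×ˢ Finset.Icc (-(i:ℤ)) i).image (fun q => (q.1.1 + q.2, q.1.2))).card := by
  classical
  set B := ((A ×ˢ Finset.Icc (-(i:ℤ)) i).image (fun q => (q.1.1 + q.2, q.1.2))) with hB
  have h1 : A.card = ∑ y ∈ A.image Prod.snd, (A.filter (fun a => a.2 = y)).card :=
    Finset.card_eq_sum_card_image _ _
  have h2 : B.card = ∑ y ∈ A.image Prod.snd, (B.filter (fun a => a.2 = y)).card := by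
    apply Finset.card_eq_sum_card_fiberwise
    intro b hb
    simp only [hB, Finset.coe_image, Set.mem_image, Finset.mem_coe, Finset.mem_product] at hb
    obtain ⟨q, hq, rfl⟩ := hb
    exact Finset.mem_coe.2 (Finset.mem_image.2 ⟨q.1, hq.1, rfl⟩)
  rw [h1, h2, mul_comm, ← smul_eq_mul (a := (Finset.card _)), ← Finset.sum_const,
    ← Finset.sum_add_distrib]
  apply Finset.sum_le_sum
  intro y hy
  set T := (A.filter (fun a => a.2 = y)).image Prod.fst with hT
  have hTc : T.card = (A.filter (fun a => a.2 = y)).card := by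
    apply Finset.card_image_of_injOn
    intro a ha b hb hab
    simp only [Finset.coe_filter, Set.mem_ofPred_eq] at ha hb
    exact Prod.ext hab (ha.2.trans hb.2.symm)
  have hTn : T.Nonempty := by
    obtain ⟨a, ha, rfl⟩ := Finset.mem_image.1 hy
    exact ⟨a.1, Finset.mem_image_of_mem _ (by simp [ha])⟩
  open scoped Pointwise in
  have hcd := cauchy_davenport_add_of_linearOrder_isCancelAdd (s := T)
    (t := Finset.Icc (-(i:ℤ)) i) hTn ⟨0, by simp⟩
  open scoped Pointwise in
  have hle : (T + Finset.Icc (-(i:ℤ)) i).card ≤ (B.filter (fun a => a.2 = y)).card := by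
    apply Finset.card_le_card_of_injOn (fun t => (t, y))
    · intro t ht
      obtain ⟨s, hs, u, hu, rfl⟩ := Finset.mem_add.1 (Finset.mem_coe.1 ht)
      obtain ⟨a, ha, rfl⟩ := Finset.mem_image.1 hs
      obtain ⟨ha', rfl⟩ := Finset.mem_filter.1 ha
      simp only [Finset.coe_filter, Set.mem_ofPred_eq, and_true]
      exact Finset.mem_image.2 ⟨(a, u), Finset.mem_product.2 ⟨ha', hu⟩, rfl⟩
    · intro a _ b _ hab
      simpa using hab
  have : (Finset.Icc (-(i:ℤ)) i).card = 2 * i + 1 := by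
    rw [Int.card_Icc]; omega
  omega

lemma grid_bm (A B : Finset (ℤ × ℤ)) (i : ℕ) (hA : A.Nonempty)
    (h : ∀ p ∈ A, ∀ q : ℤ × ℤ, |q.1 - p.1| ≤ i → |q.2 - p.2| ≤ i → q ∈ B) :
    ∃ r c : ℕ, A.card ≤ r * c ∧ A.card + 2 * i * r + 2 * i * (c + 2 * i) ≤ B.card := by
  classical
  refine ⟨(A.image Prod.snd).card, (A.image Prod.fst).card, ?_, ?_⟩
  · rw [mul_comm, ← Finset.card_product]
    apply Finset.card_le_card
    intro a ha
    exact Finset.mem_product.2 ⟨Finset.mem_image_of_mem _ ha, Finset.mem_image_of_mem _ ha⟩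
  · have h1 := row_card A i
    set A1 := ((A ×ˢ Finset.Icc (-(i:ℤ)) i).image (fun q => (q.1.1 + q.2, q.1.2))) with hA1
    have h2 := row_card (A1.image Prod.swap) i
    rw [Finset.card_image_of_injective _ Prod.swap_injective] at h2
    set A2 := (((A1.image Prod.swap) ×ˢ Finset.Icc (-(i:ℤ)) i).image
      (fun q => (q.1.1 + q.2, q.1.2))) with hA2
    have h3 : A2.card ≤ B.card := by
      rw [← Finset.card_image_of_injective _ (Prod.swap_injective (α := ℤ) (β := ℤ))]
      apply Finset.card_le_card
      intro z hz
      simp only [hA2, hA1, Finset.mem_image, Finset.mem_product, Finset.mem_Icc] at hz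
      obtain ⟨_, ⟨⟨_, u⟩, ⟨⟨_, ⟨⟨a, v⟩, ⟨ha, hv⟩, rfl⟩, rfl⟩, hu⟩, rfl⟩, rfl⟩ := hz
      apply h a ha
      · simp only [Prod.swap, add_sub_cancel_left, abs_le]; simpa using hv
      · simp only [Prod.swap, add_sub_cancel_left, abs_le]; simpa using hu
    have h4 : (A.image Prod.fst).card + 2 * i ≤ ((A1.image Prod.swap).image Prod.snd).card := by
      open scoped Pointwise in
      have hcd := cauchy_davenport_add_of_linearOrder_isCancelAdd (s := A.image Prod.fst)
        (t := Finset.Icc (-(i:ℤ)) i) (hA.image _) ⟨0, by simp⟩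
      open scoped Pointwise in
      have hle : (A.image Prod.fst + Finset.Icc (-(i:ℤ)) i).card ≤
          ((A1.image Prod.swap).image Prod.snd).card := by
        apply Finset.card_le_card
        intro t ht
        obtain ⟨s, hs, u, hu, rfl⟩ := Finset.mem_add.1 ht
        obtain ⟨a, ha, rfl⟩ := Finset.mem_image.1 hs
        refine Finset.mem_image.2 ⟨(a.2, a.1 + u), Finset.mem_image.2 ⟨(a.1 + u, a.2), ?_, rfl⟩, rfl⟩
        exact Finset.mem_image.2 ⟨(a, u), Finset.mem_product.2 ⟨ha, hu⟩, rfl⟩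
      have : (Finset.Icc (-(i:ℤ)) i).card = 2 * i + 1 := by
        rw [Int.card_Icc]; omega
      omega
    have h5 := Nat.mul_le_mul_left (2 * i) h4
    omega

/-- index of the grid cell in rotated coordinates -/
def gcell (h : ℝ) (x : ℝ × ℝ) : ℤ × ℤ := (⌊(x.1 + x.2) / h⌋, ⌊(x.1 - x.2) / h⌋)

lemma l1_lt_iff (x : ℝ × ℝ) (R : ℝ) : l1 x < R ↔ |x.1 + x.2| < R ∧ |x.1 - x.2| < R := by
  unfold l1
  rcases abs_cases x.1 with ⟨h1, _⟩ | ⟨h1, _⟩ <;> rcases abs_cases x.2 with ⟨h2, _⟩ | ⟨h2, _⟩ <;>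
  rw [h1, h2, abs_lt, abs_lt] <;>
  constructor <;> intro h <;> (try obtain ⟨⟨_, _⟩, _, _⟩ := h) <;>
  (try refine ⟨⟨?_, ?_⟩, ?_, ?_⟩) <;> linarith

lemma l1_le_iff (x : ℝ × ℝ) (R : ℝ) : l1 x ≤ R ↔ |x.1 + x.2| ≤ R ∧ |x.1 - x.2| ≤ R := by
  unfold l1
  rcases abs_cases x.1 with ⟨h1, _⟩ | ⟨h1, _⟩ <;> rcases abs_cases x.2 with ⟨h2, _⟩ | ⟨h2, _⟩ <;>
  rw [h1, h2, abs_le, abs_le] <;>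
  constructor <;> intro h <;> (try obtain ⟨⟨_, _⟩, _, _⟩ := h) <;>
  (try refine ⟨⟨?_, ?_⟩, ?_, ?_⟩) <;> linarith

lemma l1_add (x y : ℝ × ℝ) : l1 (x + y) ≤ l1 x + l1 y := by
  unfold l1
  have := abs_add_le x.1 y.1
  have := abs_add_le x.2 y.2
  simp only [Prod.fst_add, Prod.snd_add]; linarith

lemma l1_nonneg (x : ℝ × ℝ) : 0 ≤ l1 x := by unfold l1; positivity

lemma measurable_l1 : Measurable l1 := by unfold l1; fun_prop

lemma measurable_gcell (h : ℝ) : Measurable (gcell h) := by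
  unfold gcell
  exact (Int.measurable_floor.comp (by fun_prop)).prodMk (Int.measurable_floor.comp (by fun_prop))

lemma measurable_layerIdx (Δ : ℝ) (i : ℕ) : Measurable (layerIdx Δ i) := by
  unfold layerIdx
  exact Nat.measurable_floor.comp ((measurable_l1.mul_const _).div_const _)

lemma l1_gcell {h : ℝ} (hh : 0 < h) {x y : ℝ × ℝ} (hxy : gcell h x = gcell h y) :
    l1 x ≤ l1 y + h := by
  have e : x = y + (x - y) := by abel
  have : l1 (x - y) ≤ h := by
    rw [l1_le_iff]
    simp only [gcell, Prod.mk.injEq] at hxy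
    have h1 := Int.abs_sub_lt_one_of_floor_eq_floor hxy.1
    have h2 := Int.abs_sub_lt_one_of_floor_eq_floor hxy.2
    rw [← sub_div, abs_div, abs_of_pos hh, div_lt_one hh] at h1 h2
    constructor
    · rw [Prod.fst_sub, Prod.snd_sub]; rw [show x.1 - y.1 + (x.2 - y.2) = x.1 + x.2 - (y.1 + y.2) by ring]; exact h1.le
    · rw [Prod.fst_sub, Prod.snd_sub]; rw [show x.1 - y.1 - (x.2 - y.2) = x.1 - x.2 - (y.1 - y.2) by ring]; exact h2.le
  calc l1 x = l1 (y + (x - y)) := by rw [← e]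
    _ ≤ _ := l1_add _ _
    _ ≤ _ := by linarith

/-- rotation by 45 degrees (times √2) -/
def rot : (ℝ × ℝ) →ₗ[ℝ] (ℝ × ℝ) :=
  (LinearMap.fst ℝ ℝ ℝ + LinearMap.snd ℝ ℝ ℝ).prod (LinearMap.fst ℝ ℝ ℝ - LinearMap.snd ℝ ℝ ℝ)

lemma rot_det : LinearMap.det rot ≠ 0 := by
  have hi : Function.Injective rot := by
    intro x y hxy
    simp [rot] at hxy
    exact Prod.ext (by linarith) (by linarith)
  have := LinearEquiv.coe_det (LinearEquiv.ofInjectiveEndo rot hi)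
  intro h0
  apply Units.ne_zero (LinearEquiv.det (LinearEquiv.ofInjectiveEndo rot hi))
  rw [this, ← h0]
  rfl

lemma exists_vol : ∃ c : ℝ≥0∞, c ≠ 0 ∧ c ≠ ⊤ ∧
    (∀ h : ℝ, 0 < h → ∀ p, volume {x | gcell h x = p} = c * ENNReal.ofReal (h ^ 2)) ∧
    (∀ R : ℝ, 0 ≤ R → volume {x | l1 x < R} = c * ENNReal.ofReal (4 * R ^ 2)) := by
  refine ⟨ENNReal.ofReal |(LinearMap.det rot)⁻¹|, ?_, ENNReal.ofReal_ne_top, ?_, ?_⟩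
  · have := rot_det
    simp [this]
  · intro h hh p
    have : {x | gcell h x = p} = rot ⁻¹' (Set.Ico (p.1 * h) ((p.1 + 1) * h) ×ˢ
        Set.Ico (p.2 * h) ((p.2 + 1) * h)) := by
      ext x
      simp only [gcell, Set.mem_ofPred_eq, Prod.ext_iff, Int.floor_eq_iff, rot, Set.mem_preimage,
        Set.mem_prod, Set.mem_Ico, le_div_iff₀ hh, div_lt_iff₀ hh]
      rfl
    rw [this, Measure.addHaar_preimage_linearMap _ rot_det, Measure.volume_eq_prod,
      Measure.prod_prod, Real.volume_Ico, Real.volume_Ico, ← ENNReal.ofReal_mul (by nlinarith)]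
    congr 2
    ring
  · intro R hR
    have : {x | l1 x < R} = rot ⁻¹' (Set.Ioo (-R) R ×ˢ Set.Ioo (-R) R) := by
      ext x
      simp only [l1_lt_iff, abs_lt, rot, Set.mem_ofPred_eq, Set.mem_preimage, Set.mem_prod, Set.mem_Ioo]
      rfl
    rw [this, Measure.addHaar_preimage_linearMap _ rot_det, Measure.volume_eq_prod,
      Measure.prod_prod, Real.volume_Ioo, ← ENNReal.ofReal_mul (by linarith)]
    congr 2
    ring

/-- bathtub -/
lemma bathtub (A : Set (ℝ × ℝ)) (hA : MeasurableSet A) (R : ℝ)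
    (hle : volume {x | l1 x < R} ≤ volume A) (hfin : volume A ≠ ⊤) :
    ∫⁻ x in {x | l1 x < R}, ENNReal.ofReal (l1 x) ≤ ∫⁻ x in A, ENNReal.ofReal (l1 x) := by
  set B := {x | l1 x < R} with hB
  have hBm : MeasurableSet B := measurableSet_lt measurable_l1 measurable_const
  have hBfin : volume B ≠ ⊤ := ne_top_of_le_ne_top hfin hle
  rw [← lintegral_inter_add_sdiff (μ := volume) (fun x => ENNReal.ofReal (l1 x)) A hBm,
    ← lintegral_inter_add_sdiff (μ := volume) (fun x => ENNReal.ofReal (l1 x)) B hA,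
    Set.inter_comm A B]
  have hd : volume (B \ A) ≤ volume (A \ B) := by
    have h1 := measure_inter_add_sdiff (μ := volume) B hA
    have h2 := measure_inter_add_sdiff (μ := volume) A hBm
    rw [Set.inter_comm A B] at h2
    rw [← h1, ← h2] at hle
    exact (ENNReal.add_le_add_iff_left
      (ne_top_of_le_ne_top hBfin (measure_mono Set.inter_subset_left))).1 hle
  refine add_le_add le_rfl ?_
  calc ∫⁻ x in B \ A, ENNReal.ofReal (l1 x) ≤ ∫⁻ x in B \ A, ENNReal.ofReal R := by
        apply setLIntegral_mono measurable_const
        intro x hx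
        exact ENNReal.ofReal_le_ofReal (le_of_lt hx.1)
    _ = ENNReal.ofReal R * volume (B \ A) := setLIntegral_const _ _
    _ ≤ ENNReal.ofReal R * volume (A \ B) := by gcongr
    _ = ∫⁻ x in A \ B, ENNReal.ofReal R := (setLIntegral_const _ _).symm
    _ ≤ _ := by
        apply setLIntegral_mono measurable_l1.ennreal_ofReal
        intro x hx
        exact ENNReal.ofReal_le_ofReal (not_lt.1 hx.2)

lemma tonelli_slice (T : Set ((ℝ × ℝ) × ℝ)) (hT : MeasurableSet T) (w : ℝ × ℝ → ℝ≥0∞)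
    (hw : Measurable w) :
    ∫⁻ x, w x * volume {l : ℝ | (x, l) ∈ T} = ∫⁻ l : ℝ, ∫⁻ x in {x | (x, l) ∈ T}, w x := by
  have h1 : ∀ x, w x * volume {l : ℝ | (x, l) ∈ T} =
      ∫⁻ l : ℝ, T.indicator (fun z => w z.1) (x, l) := by
    intro x
    have hm : MeasurableSet {l : ℝ | (x, l) ∈ T} := measurable_prodMk_left hT
    rw [← setLIntegral_const, ← lintegral_indicator hm]
    rfl
  have h2 : ∀ l : ℝ, ∫⁻ x in {x | (x, l) ∈ T}, w x =
      ∫⁻ x, T.indicator (fun z => w z.1) (x, l) := by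
    intro l
    have hm : MeasurableSet {x : ℝ × ℝ | (x, l) ∈ T} := measurable_prodMk_right hT
    rw [← lintegral_indicator hm]
    rfl
  simp_rw [h1, h2]
  rw [lintegral_lintegral_swap]
  exact ((hw.comp measurable_fst).indicator hT).aemeasurable

/-- number of cells above level -/
def Ncard (m : ℤ × ℤ → ℝ) (l : ℝ) : ℕ := {p | l < m p}.ncard

/-- radius, in units of the fine layers -/
def Krad (m : ℤ × ℤ → ℝ) (i : ℕ) (l : ℝ) : ℕ := Nat.sqrt (i ^ 2 * Ncard m l / 4)

lemma le_Krad (m : ℤ × ℤ → ℝ) (i : ℕ) (l : ℝ) (k : ℕ) :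
    k ≤ Krad m i l ↔ 4 * k ^ 2 ≤ i ^ 2 * Ncard m l := by
  unfold Krad
  rw [Nat.le_sqrt', Nat.le_div_iff_mul_le (by norm_num), mul_comm]

/-- levels contributing to layer k -/
def Sset (m : ℤ × ℤ → ℝ) (i : ℕ) (k : ℕ) : Set ℝ := {l | 0 < l ∧ k < Krad m i l}

lemma Krad_anti {m : ℤ × ℤ → ℝ} (hf : ∀ l : ℝ, 0 < l → {p | l < m p}.Finite) (i : ℕ) {l l' : ℝ}
    (hl : 0 < l) (hll : l ≤ l') : Krad m i l' ≤ Krad m i l := by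
  rw [le_Krad]
  refine ((le_Krad m i l' _).1 le_rfl).trans (Nat.mul_le_mul_left _ ?_)
  exact Set.ncard_le_ncard (fun p hp => lt_of_le_of_lt hll hp) (hf l hl)

lemma Sset_meas {m : ℤ × ℤ → ℝ} (hf : ∀ l : ℝ, 0 < l → {p | l < m p}.Finite) (i k : ℕ) :
    MeasurableSet (Sset m i k) := by
  apply Set.OrdConnected.measurableSet
  constructor
  intro x hx y hy z hz
  have h0 : 0 < z := lt_of_lt_of_le hx.1 hz.1
  exact ⟨h0, lt_of_lt_of_le hy.2 (Krad_anti hf i h0 hz.2)⟩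

lemma Sset_dp {m : ℤ × ℤ → ℝ} (hf : ∀ l : ℝ, 0 < l → {p | l < m p}.Finite) (ε : ℝ) (i : ℕ)
    (hdp : ∀ p q : ℤ × ℤ, |q.1 - p.1| ≤ i → |q.2 - p.2| ≤ i → m p ≤ Real.exp ε * m q) (k : ℕ) :
    volume (Sset m i k) ≤ ENNReal.ofReal (Real.exp ε) * volume (Sset m i (k + i ^ 2)) := by
  have hsub : Sset m i k ⊆ (fun l => Real.exp (-ε) * l) ⁻¹' Sset m i (k + i ^ 2) := by
    rintro l ⟨hl, hk⟩
    have hl' : 0 < Real.exp (-ε) * l := by positivity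
    refine ⟨hl', ?_⟩
    have hk' : 4 * (k + 1) ^ 2 ≤ i ^ 2 * Ncard m l := (le_Krad _ _ _ _).1 hk
    change k + i ^ 2 + 1 ≤ Krad m i (Real.exp (-ε) * l)
    rw [le_Krad]
    have e1 : Ncard m l = (hf l hl).toFinset.card := Set.ncard_eq_toFinset_card _ _
    have e2 : Ncard m (Real.exp (-ε) * l) = (hf _ hl').toFinset.card :=
      Set.ncard_eq_toFinset_card _ _
    have hne : (hf l hl).toFinset.Nonempty := by
      rw [← Finset.card_pos, ← e1]
      by_contra h0
      have : Ncard m l = 0 := by omega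
      rw [this] at hk'
      nlinarith
    obtain ⟨r, c, hrc, hB⟩ := grid_bm (hf l hl).toFinset (hf _ hl').toFinset i hne (by
      intro p hp q h1 h2
      simp only [Set.Finite.mem_toFinset, Set.mem_ofPred_eq] at hp ⊢
      have h3 := hdp p q h1 h2
      rw [Real.exp_neg, inv_mul_lt_iff₀ (Real.exp_pos _)]
      linarith)
    rw [← e1] at hrc hB
    rw [← e2] at hB
    have hs : 4 * (k + 1) ≤ i * (r + c) := by
      have h5 : (4 * (k + 1)) ^ 2 ≤ (i * (r + c)) ^ 2 := by
        have h6 : 4 * (r * c) ≤ (r + c) ^ 2 := by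
          zify; nlinarith [sq_nonneg ((r:ℤ) - c)]
        have h7 := Nat.mul_le_mul_left (i ^ 2) ((Nat.mul_le_mul_left 4 hrc).trans h6)
        calc (4 * (k + 1)) ^ 2 = 4 * (4 * (k + 1) ^ 2) := by ring
          _ ≤ 4 * (i ^ 2 * Ncard m l) := by omega
          _ = i ^ 2 * (4 * Ncard m l) := by ring
          _ ≤ _ := h7
          _ = _ := by ring
      exact (Nat.pow_le_pow_iff_left (by norm_num)).1 h5
    calc 4 * (k + i ^ 2 + 1) ^ 2
        = 4 * (k + 1) ^ 2 + 2 * i ^ 2 * (4 * (k + 1)) + 4 * i ^ 4 := by ring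
      _ ≤ i ^ 2 * Ncard m l + 2 * i ^ 2 * (i * (r + c)) + 4 * i ^ 4 := by gcongr
      _ = i ^ 2 * (Ncard m l + 2 * i * r + 2 * i * (c + 2 * i)) := by ring
      _ ≤ _ := by gcongr
  refine (measure_mono hsub).trans ?_
  rw [Real.volume_preimage_mul_left (Real.exp_pos _).ne', Real.exp_neg, inv_inv,
    abs_of_pos (Real.exp_pos _)]

lemma layerIdx_lt {Δ : ℝ} (hΔ : 0 < Δ) {n : ℕ} (hn : 0 < n) (x : ℝ × ℝ) (K : ℕ) :
    layerIdx Δ n x < K ↔ l1 x < K * (Δ / n) := by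
  have hn' : (0:ℝ) < n := by exact_mod_cast hn
  unfold layerIdx
  rw [Nat.floor_lt (by have := l1_nonneg x; positivity), div_lt_iff₀ hΔ, ← mul_div_assoc,
    lt_div_iff₀ hn']

lemma tonelli_a {m : ℤ × ℤ → ℝ} (hf : ∀ l : ℝ, 0 < l → {p | l < m p}.Finite) {Δ : ℝ} (hΔ : 0 < Δ)
    {i : ℕ} (hi : 0 < i) (w : ℝ × ℝ → ℝ≥0∞) (hw : Measurable w) :
    ∫⁻ x, w x * volume (Sset m i (layerIdx Δ (i ^ 2) x)) =
      ∫⁻ l in Set.Ioi (0:ℝ), ∫⁻ x in {x | l1 x < Krad m i l * (Δ / (i ^ 2 : ℕ))}, w x := by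
  have hT : MeasurableSet {z : (ℝ × ℝ) × ℝ | z.2 ∈ Sset m i (layerIdx Δ (i ^ 2) z.1)} := by
    have : {z : (ℝ × ℝ) × ℝ | z.2 ∈ Sset m i (layerIdx Δ (i ^ 2) z.1)} =
        ⋃ k : ℕ, (layerIdx Δ (i ^ 2) ⁻¹' {k}) ×ˢ Sset m i k := by
      ext z
      simp
    rw [this]
    exact MeasurableSet.iUnion fun k =>
      (measurable_layerIdx _ _ (measurableSet_singleton k)).prod (Sset_meas hf i k)
  have := tonelli_slice _ hT w hw
  refine this.trans ?_
  rw [← lintegral_indicator measurableSet_Ioi]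
  congr 1
  ext l
  by_cases hl : 0 < l
  · rw [Set.indicator_of_mem (Set.mem_Ioi.2 hl)]
    congr 2
    ext x
    simp only [Sset, Set.mem_ofPred_eq, hl, true_and]
    exact layerIdx_lt hΔ (by positivity) x _
  · rw [Set.indicator_of_notMem (by simpa using hl)]
    simp [Sset, hl]

lemma tonelli_m (m : ℤ × ℤ → ℝ) (h : ℝ) (w : ℝ × ℝ → ℝ≥0∞) (hw : Measurable w) :
    ∫⁻ x, w x * ENNReal.ofReal (m (gcell h x)) =
      ∫⁻ l in Set.Ioi (0:ℝ), ∫⁻ x in {x | l < m (gcell h x)}, w x := by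
  have hmm : Measurable (fun x => m (gcell h x)) :=
    (measurable_of_countable m).comp (measurable_gcell h)
  have hT : MeasurableSet {z : (ℝ × ℝ) × ℝ | 0 < z.2 ∧ z.2 < m (gcell h z.1)} :=
    (measurableSet_lt measurable_const measurable_snd).inter
      (measurableSet_lt measurable_snd (hmm.comp measurable_fst))
  have := tonelli_slice _ hT w hw
  rw [← lintegral_indicator measurableSet_Ioi]
  refine Eq.trans ?_ (this.trans ?_)
  · congr 1
    ext x
    congr 1
    have : {l : ℝ | (x, l) ∈ {z : (ℝ × ℝ) × ℝ | 0 < z.2 ∧ z.2 < m (gcell h z.1)}} =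
      Set.Ioo 0 (m (gcell h x)) := rfl
    rw [this, Real.volume_Ioo, sub_zero]
  · congr 1
    ext l
    by_cases hl : 0 < l
    · rw [Set.indicator_of_mem (Set.mem_Ioi.2 hl)]
      congr 2
      ext x
      simp [hl]
    · rw [Set.indicator_of_notMem (by simpa using hl)]
      simp [hl]

lemma vol_level {m : ℤ × ℤ → ℝ} (hf : ∀ l : ℝ, 0 < l → {p | l < m p}.Finite) {h : ℝ}
    {v : ℝ≥0∞} (hv : ∀ p, volume {x | gcell h x = p} = v) {l : ℝ} (hl : 0 < l) :
    volume {x | l < m (gcell h x)} = Ncard m l * v := by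
  have := sum_measure_preimage_singleton (μ := (volume : Measure (ℝ × ℝ))) (f := gcell h)
    (hf l hl).toFinset (fun y _ => measurable_gcell h (measurableSet_singleton y))
  have e : (gcell h ⁻¹' ((hf l hl).toFinset : Set (ℤ × ℤ))) = {x | l < m (gcell h x)} := by
    ext x; simp
  rw [e] at this
  have hv' : ∀ p, volume (gcell h ⁻¹' {p}) = v := hv
  simp_rw [hv'] at this
  rw [← this, Finset.sum_const, nsmul_eq_mul, Ncard,
    Set.ncard_eq_toFinset_card _ (hf l hl)]

section avg
variable {ε Δ : ℝ} {μ : Measure (ℝ × ℝ)}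

lemma avg_cost [IsProbabilityMeasure μ] {h : ℝ} (hh : 0 < h) {v : ℝ≥0∞}
    (hv : ∀ p, volume {x | gcell h x = p} = v) :
    ∫⁻ x, ENNReal.ofReal (l1 x) * μ {y | gcell h y = gcell h x} ≤
      v * (cost μ + ENNReal.ofReal h) := by
  have hT : MeasurableSet {z : (ℝ × ℝ) × (ℝ × ℝ) | gcell h z.2 = gcell h z.1} :=
    measurableSet_eq_fun ((measurable_gcell h).comp measurable_snd)
      ((measurable_gcell h).comp measurable_fst)
  set T := {z : (ℝ × ℝ) × (ℝ × ℝ) | gcell h z.2 = gcell h z.1} with hTd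
  calc ∫⁻ x, ENNReal.ofReal (l1 x) * μ {y | gcell h y = gcell h x}
      = ∫⁻ x, ∫⁻ y, T.indicator (fun z => ENNReal.ofReal (l1 z.1)) (x, y) ∂μ := by
        congr 1
        ext x
        have hm : MeasurableSet {y | gcell h y = gcell h x} := measurable_prodMk_left hT
        rw [← setLIntegral_const, ← lintegral_indicator hm]
        rfl
    _ = ∫⁻ y, (∫⁻ x, T.indicator (fun z => ENNReal.ofReal (l1 z.1)) (x, y)) ∂μ := by
        rw [lintegral_lintegral_swap]
        exact ((measurable_l1.ennreal_ofReal.comp measurable_fst).indicator hT).aemeasurable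
    _ ≤ ∫⁻ y, (ENNReal.ofReal (l1 y) + ENNReal.ofReal h) * v ∂μ := by
        apply lintegral_mono
        intro y
        have hm : MeasurableSet {x | gcell h x = gcell h y} :=
          measurable_gcell h (measurableSet_singleton _)
        simp only
        rw [← hv (gcell h y), ← setLIntegral_const, ← lintegral_indicator hm]
        apply lintegral_mono
        intro x
        beta_reduce
        by_cases hx : gcell h x = gcell h y
        · rw [Set.indicator_of_mem (show (x, y) ∈ T from hx.symm),
            Set.indicator_of_mem (show x ∈ {x | gcell h x = gcell h y} from hx),
            ← ENNReal.ofReal_add (l1_nonneg _) hh.le]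
          exact ENNReal.ofReal_le_ofReal (l1_gcell hh hx)
        · rw [Set.indicator_of_notMem (show (x, y) ∉ T from fun h => hx h.symm)]
          exact zero_le
    _ = _ := by
        rw [lintegral_mul_const _ (measurable_l1.ennreal_ofReal.add_const _),
          lintegral_add_right _ measurable_const, lintegral_const, measure_univ, mul_one, mul_comm]
        rfl

lemma avg_mass [IsProbabilityMeasure μ] {h : ℝ} {v : ℝ≥0∞}
    (hv : ∀ p, volume {x | gcell h x = p} = v) :
    ∫⁻ x, μ {y | gcell h y = gcell h x} = v := by
  have hT : MeasurableSet {z : (ℝ × ℝ) × (ℝ × ℝ) | gcell h z.2 = gcell h z.1} :=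
    measurableSet_eq_fun ((measurable_gcell h).comp measurable_snd)
      ((measurable_gcell h).comp measurable_fst)
  have h1 := Measure.prod_apply (μ := (volume : Measure (ℝ × ℝ))) (ν := μ) hT
  have h2 := Measure.prod_apply_symm (μ := (volume : Measure (ℝ × ℝ))) (ν := μ) hT
  have h3 : ∀ y, volume ((fun x => (x, y)) ⁻¹' {z : (ℝ × ℝ) × (ℝ × ℝ) | gcell h z.2 = gcell h z.1}) = v := by
    intro y
    rw [← hv (gcell h y)]
    congr 1
    ext x
    exact eq_comm
  simp_rw [h3] at h2
  rw [h1, lintegral_const, measure_univ, mul_one] at h2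
  exact h2

lemma cell_dp (hdp : DPC ε Δ μ) {i : ℕ} (hi : 0 < i) (hΔ : 0 < Δ) (p q : ℤ × ℤ)
    (h1 : |q.1 - p.1| ≤ i) (h2 : |q.2 - p.2| ≤ i) :
    μ {x | gcell (Δ / i) x = p} ≤ ENNReal.ofReal (Real.exp ε) * μ {x | gcell (Δ / i) x = q} := by
  have hi' : (0:ℝ) < i := by exact_mod_cast hi
  have hh : 0 < Δ / i := by positivity
  set h := Δ / i with hhd
  set d1 : ℝ := ((q.1 - p.1 : ℤ) : ℝ)
  set d2 : ℝ := ((q.2 - p.2 : ℤ) : ℝ)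
  have hd1 : |d1| ≤ i := by
    have : ((|q.1 - p.1| : ℤ) : ℝ) ≤ ((i : ℤ) : ℝ) := Int.cast_le.2 h1
    simpa [d1] using this
  have hd2 : |d2| ≤ i := by
    have : ((|q.2 - p.2| : ℤ) : ℝ) ≤ ((i : ℤ) : ℝ) := Int.cast_le.2 h2
    simpa [d2] using this
  have hΔe : (i:ℝ) * h = Δ := by rw [hhd]; field_simp
  refine (hdp _ (measurable_gcell h (measurableSet_singleton p))
    ((d1 + d2) * h / 2, (d1 - d2) * h / 2) ?_).trans ?_
  · rw [l1_le_iff]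
    constructor
    · rw [show (d1 + d2) * h / 2 + (d1 - d2) * h / 2 = d1 * h by ring, abs_mul, abs_of_pos hh, ← hΔe]
      gcongr
    · rw [show (d1 + d2) * h / 2 - (d1 - d2) * h / 2 = d2 * h by ring, abs_mul, abs_of_pos hh, ← hΔe]
      gcongr
  · gcongr
    rintro _ ⟨x, hx, rfl⟩
    have hx' : gcell h x = p := hx
    simp only [gcell, Prod.ext_iff] at hx'
    simp only [Set.mem_ofPred_eq, gcell, Prod.ext_iff, Prod.fst_add, Prod.snd_add]
    constructor
    · rw [show (x.1 + (d1 + d2) * h / 2 + (x.2 + (d1 - d2) * h / 2)) / h = (x.1 + x.2) / h + d1 by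
        field_simp; ring, Int.floor_add_intCast, hx'.1]
      ring
    · rw [show (x.1 + (d1 + d2) * h / 2 - (x.2 + (d1 - d2) * h / 2)) / h = (x.1 - x.2) / h + d2 by
        field_simp; ring, Int.floor_add_intCast, hx'.2]
      ring

lemma cell_finite [IsProbabilityMeasure μ] (h l : ℝ) (hl : 0 < l) :
    {p | l < (μ {x | gcell h x = p}).toReal}.Finite := by
  have hs : Summable fun p => (μ {x | gcell h x = p}).toReal := by
    apply ENNReal.summable_toReal
    rw [← measure_iUnion]
    · exact measure_ne_top _ _
    rotate_left
    · intro p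
      exact measurable_gcell h (measurableSet_singleton p)
    · intro p q hpq
      refine Set.disjoint_left.2 fun x hx hy => hpq ?_
      exact Eq.trans (Eq.symm hx) hy
  have := hs.tendsto_cofinite_zero.eventually (gt_mem_nhds hl)
  refine Set.Finite.subset this ?_
  intro p hp hlt
  have hlt' : (μ {x | gcell h x = p}).toReal < l := hlt
  exact lt_asymm hlt' hp

end avg

lemma Krad_low (m : ℤ × ℤ → ℝ) (i : ℕ) (hi : 2 ≤ i) (l : ℝ) :
    ((i:ℝ) - 2) ^ 2 * Ncard m l ≤ 4 * (Krad m i l : ℝ) ^ 2 := by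
  have h := mt (le_Krad m i l (Krad m i l + 1)).2 (by omega)
  rw [not_le] at h
  set N := Ncard m l
  set K := Krad m i l
  rcases Nat.eq_zero_or_pos N with h0 | h0
  · rw [h0]; simp
  have h' : (i:ℝ) ^ 2 * N < 4 * ((K:ℝ) + 1) ^ 2 := by exact_mod_cast h
  have hN : (1:ℝ) ≤ N := by exact_mod_cast h0
  have hi' : (2:ℝ) ≤ i := by exact_mod_cast hi
  set s := Real.sqrt N with hs
  have hs2 : s ^ 2 = N := Real.sq_sqrt (by linarith)
  have hs1 : 1 ≤ s := Real.one_le_sqrt.2 hN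
  have h3 : (i:ℝ) * s < 2 * (K + 1) := by
    apply lt_of_pow_lt_pow_left₀ 2 (by positivity)
    rw [mul_pow, hs2]; linarith
  have h4 : ((i:ℝ) - 2) * s ≤ 2 * K := by nlinarith
  have h5 : 0 ≤ ((i:ℝ) - 2) * s := mul_nonneg (by linarith) (by linarith)
  have h6 := pow_le_pow_left₀ h5 h4 2
  rw [mul_pow, hs2] at h6
  linarith

lemma layerIdx_add {Δ : ℝ} (hΔ : 0 < Δ) (n : ℕ) (x t : ℝ × ℝ) (ht : l1 t ≤ Δ) :
    layerIdx Δ n (x + t) ≤ layerIdx Δ n x + n := by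
  unfold layerIdx
  rw [← Nat.floor_add_natCast (by have := l1_nonneg x; positivity)]
  apply Nat.floor_le_floor
  rw [div_add' _ _ _ hΔ.ne']
  apply div_le_div_of_nonneg_right _ hΔ.le
  have := l1_add x t
  have hn : (0:ℝ) ≤ n := by positivity
  nlinarith

lemma dpc_of_seq {ε Δ : ℝ} (hΔ : 0 < Δ) {n : ℕ} {a : ℕ → ℝ≥0∞} (ha : Antitone a)
    (hdp : ∀ k, a k ≤ ENNReal.ofReal (Real.exp ε) * a (k + n)) :
    DPC ε Δ (volume.withDensity (fun x => a (layerIdx Δ n x))) := by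
  intro S hS t ht
  have hS' : MeasurableSet ((· + t) '' S) := by
    exact (MeasurableEquiv.addRight t).measurableSet_image.2 hS
  have hmeas : Measurable (fun x => a (layerIdx Δ n x)) :=
    (measurable_of_countable a).comp (measurable_layerIdx _ _)
  rw [withDensity_apply _ hS, withDensity_apply _ hS']
  have e : ∫⁻ x in (· + t) '' S, a (layerIdx Δ n x) = ∫⁻ x in S, a (layerIdx Δ n (x + t)) := by
    rw [← lintegral_indicator hS', ← lintegral_indicator hS,
      ← lintegral_add_right_eq_self (μ := (volume : Measure (ℝ × ℝ))) _ t]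
    congr 1
    ext x
    by_cases hx : x ∈ S
    · rw [Set.indicator_of_mem hx, Set.indicator_of_mem (Set.mem_image_of_mem _ hx)]
    · rw [Set.indicator_of_notMem hx, Set.indicator_of_notMem]
      rintro ⟨y, hy, hxy⟩
      exact hx (add_right_cancel hxy ▸ hy)
  rw [e, ← lintegral_const_mul (f := fun x => a (layerIdx Δ n (x + t))) _ (hmeas.comp (measurable_add_const t))]
  apply lintegral_mono
  intro x
  refine (hdp _).trans ?_
  exact mul_le_mul_right (ha (layerIdx_add hΔ n x t ht)) _

lemma main_step {ε Δ : ℝ} (hΔ : 0 < Δ) {μ : Measure (ℝ × ℝ)} (hμ : MemP ε Δ μ) (i : ℕ)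
    (hi : 3 ≤ i) :
    (⨅ (μ : Measure (ℝ × ℝ)) (_ : ∃ i : ℕ, 1 ≤ i ∧ MemPa ε Δ i μ), cost μ) ≤
      (ENNReal.ofReal ((((i:ℝ) - 2) / i) ^ 2))⁻¹ * (cost μ + ENNReal.ofReal (Δ / i)) := by
  obtain ⟨hp, hdp⟩ := hμ
  obtain ⟨c, hc0, hct, hcell, hball⟩ := exists_vol
  have hi0 : 0 < i := by omega
  have hi' : (3:ℝ) ≤ i := by exact_mod_cast hi
  have hip : (0:ℝ) < i := by linarith
  set h := Δ / i with hhd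
  have hh : 0 < h := by positivity
  set v := c * ENNReal.ofReal (h ^ 2) with hvd
  have hv := hcell h hh
  have hv0 : v ≠ 0 := mul_ne_zero hc0 (by simpa using hh.ne')
  have hvt : v ≠ ⊤ := ENNReal.mul_ne_top hct ENNReal.ofReal_ne_top
  set m : ℤ × ℤ → ℝ := fun p => (μ {x | gcell h x = p}).toReal with hm
  have hf : ∀ l : ℝ, 0 < l → {p | l < m p}.Finite := fun l hl => cell_finite h l hl
  have hmdp : ∀ p q : ℤ × ℤ, |q.1 - p.1| ≤ i → |q.2 - p.2| ≤ i → m p ≤ Real.exp ε * m q := by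
    intro p q h1 h2
    have := ENNReal.toReal_mono (ENNReal.mul_ne_top ENNReal.ofReal_ne_top (measure_ne_top _ _))
      (cell_dp hdp hi0 hΔ p q h1 h2)
    rwa [ENNReal.toReal_mul, ENNReal.toReal_ofReal (Real.exp_pos _).le] at this
  have hme : ∀ x, ENNReal.ofReal (m (gcell h x)) = μ {y | gcell h y = gcell h x} :=
    fun x => ENNReal.ofReal_toReal (measure_ne_top _ _)
  set n := i ^ 2 with hn
  have hn0 : 0 < n := by positivity
  set a : ℕ → ℝ≥0∞ := fun k => volume (Sset m i k) with ha
  have ha_anti : Antitone a := by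
    intro k k' hkk
    exact measure_mono fun l hl => ⟨hl.1, lt_of_le_of_lt hkk hl.2⟩
  have ha_dp : ∀ k, a k ≤ ENNReal.ofReal (Real.exp ε) * a (k + n) := Sset_dp hf ε i hmdp
  -- comparison of volumes
  have hR : ∀ l, volume {x | l1 x < Krad m i l * (Δ / (i ^ 2 : ℕ))} =
      c * ENNReal.ofReal (4 * (Krad m i l : ℝ) ^ 2 / i ^ 2 * h ^ 2) := by
    intro l
    rw [hball _ (by positivity)]
    congr 2
    rw [hhd]; push_cast; field_simp
  have hNv : ∀ l, 0 < l → volume {x | l < m (gcell h x)} =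
      c * ENNReal.ofReal (Ncard m l * h ^ 2) := by
    intro l hl
    rw [vol_level hf hv hl, ENNReal.ofReal_mul (by positivity), ENNReal.ofReal_natCast]
    ring
  have hup : ∀ l, 0 < l → volume {x | l1 x < Krad m i l * (Δ / (i ^ 2 : ℕ))} ≤
      volume {x | l < m (gcell h x)} := by
    intro l hl
    rw [hR, hNv l hl]
    gcongr
    rw [div_le_iff₀ (by positivity), mul_comm _ ((i:ℝ) ^ 2)]
    exact_mod_cast (le_Krad m i l _).1 le_rfl
  have hlow : ∀ l, 0 < l → ENNReal.ofReal ((((i:ℝ) - 2) / i) ^ 2) * volume {x | l < m (gcell h x)} ≤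
      volume {x | l1 x < Krad m i l * (Δ / (i ^ 2 : ℕ))} := by
    intro l hl
    rw [hR, hNv l hl, mul_left_comm, ← ENNReal.ofReal_mul (by positivity), ← mul_assoc]
    gcongr
    rw [div_pow, div_mul_eq_mul_div]
    exact div_le_div_of_nonneg_right (Krad_low m i (by omega) l) (by positivity)
  set q := ENNReal.ofReal ((((i:ℝ) - 2) / i) ^ 2) with hq
  have hq0 : q ≠ 0 := by
    have : 0 < ((i:ℝ) - 2) / i := div_pos (by linarith) hip
    simp only [hq, ne_eq, ENNReal.ofReal_eq_zero, not_le]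
    positivity
  -- mass
  set M := ∫⁻ x, a (layerIdx Δ n x) with hM
  have hM1 : M = ∫⁻ l in Set.Ioi (0:ℝ), volume {x | l1 x < Krad m i l * (Δ / (i ^ 2 : ℕ))} := by
    have := tonelli_a hf hΔ hi0 (fun _ => 1) measurable_const
    simpa using this
  have hmass : ∫⁻ l in Set.Ioi (0:ℝ), volume {x | l < m (gcell h x)} = v := by
    have := tonelli_m m h (fun _ => 1) measurable_const
    simp only [one_mul, hme, setLIntegral_one] at this
    rw [← this, avg_mass hv]
  have hMup : M ≤ v := by
    rw [hM1, ← hmass]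
    exact setLIntegral_mono' measurableSet_Ioi fun l hl => hup l hl
  have hMlow : q * v ≤ M := by
    rw [hM1, ← hmass]
    refine (lintegral_const_mul_le _ _).trans ?_
    exact setLIntegral_mono' measurableSet_Ioi fun l hl => hlow l hl
  have hM0 : M ≠ 0 := fun h0 => by
    rw [h0] at hMlow
    exact mul_ne_zero hq0 hv0 (le_antisymm hMlow zero_le)
  have hMt : M ≠ ⊤ := ne_top_of_le_ne_top hvt hMup
  -- cost
  have hcost : ∫⁻ x, ENNReal.ofReal (l1 x) * a (layerIdx Δ n x) ≤
      v * (cost μ + ENNReal.ofReal h) := by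
    refine le_trans ?_ (avg_cost hh hv)
    simp_rw [← hme]
    rw [tonelli_m m h _ measurable_l1.ennreal_ofReal, ha, hn,
      tonelli_a hf hΔ hi0 _ measurable_l1.ennreal_ofReal]
    refine setLIntegral_mono' measurableSet_Ioi fun l hl => ?_
    apply bathtub _ _ _ (hup l hl)
    · rw [hNv l hl]
      exact ENNReal.mul_ne_top hct ENNReal.ofReal_ne_top
    · exact measurableSet_lt measurable_const
        ((measurable_of_countable m).comp (measurable_gcell h))
  -- the new measure
  set b : ℕ → ℝ≥0∞ := fun k => M⁻¹ * a k with hb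
  have hb_anti : Antitone b := fun k k' hkk => mul_le_mul_right (ha_anti hkk) _
  have hameas : Measurable (fun x => a (layerIdx Δ n x)) :=
    (measurable_of_countable a).comp (measurable_layerIdx _ _)
  have hbmeas : Measurable (fun x => b (layerIdx Δ n x)) :=
    (measurable_of_countable b).comp (measurable_layerIdx _ _)
  have hmem : MemPa ε Δ n (volume.withDensity (fun x => b (layerIdx Δ n x))) := by
    refine ⟨⟨⟨?_⟩, dpc_of_seq hΔ hb_anti ?_⟩, b, rfl, hb_anti⟩
    · rw [withDensity_apply _ MeasurableSet.univ, Measure.restrict_univ]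
      simp only [hb]
      rw [lintegral_const_mul _ hameas]
      exact ENNReal.inv_mul_cancel hM0 hMt
    · intro k
      simp only [hb]
      rw [mul_left_comm]
      exact mul_le_mul_right (ha_dp k) _
  refine (iInf₂_le _ ⟨n, hn0, hmem⟩).trans ?_
  unfold cost at hcost ⊢
  rw [lintegral_withDensity_eq_lintegral_mul _ hbmeas measurable_l1.ennreal_ofReal]
  have e : ∀ x, ((fun x => b (layerIdx Δ n x)) * fun x => ENNReal.ofReal (l1 x)) x =
      M⁻¹ * (ENNReal.ofReal (l1 x) * a (layerIdx Δ n x)) := by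
    intro x
    simp only [hb, Pi.mul_apply]
    ring
  simp_rw [e]
  rw [lintegral_const_mul (f := fun x => ENNReal.ofReal (l1 x) * a (layerIdx Δ n x)) _
    (measurable_l1.ennreal_ofReal.mul hameas)]
  calc _ ≤ (q * v)⁻¹ * (v * ((∫⁻ x, ENNReal.ofReal (l1 x) ∂μ) + ENNReal.ofReal h)) :=
        mul_le_mul' (ENNReal.inv_le_inv.2 hMlow) hcost
    _ = q⁻¹ * ((v⁻¹ * v) * ((∫⁻ x, ENNReal.ofReal (l1 x) ∂μ) + ENNReal.ofReal h)) := by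
        rw [ENNReal.mul_inv (Or.inl hq0) (Or.inr hv0)]; ring
    _ = _ := by rw [ENNReal.inv_mul_cancel hv0 hvt, one_mul]

end aux

/-- Lemma 4: the optimal cost V* equals the infimum over measures with
layer-constant, monotonically nonincreasing density sequences. -/
theorem Vstar_eq_inf_Pa (ε Δ : ℝ) (hε : 0 < ε) (hΔ : 0 < Δ) :
    (⨅ (μ : Measure (ℝ × ℝ)) (_ : MemP ε Δ μ), cost μ) =
    ⨅ (μ : Measure (ℝ × ℝ)) (_ : ∃ i : ℕ, 1 ≤ i ∧ MemPa ε Δ i μ), cost μ := by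
  apply le_antisymm
  · refine le_iInf₂ fun μ hμ => ?_
    obtain ⟨i, _, hi⟩ := hμ
    exact iInf₂_le μ hi.1
  · refine le_iInf₂ fun μ hμ => ?_
    have hlim : Tendsto (fun i : ℕ => (ENNReal.ofReal ((((i:ℝ) - 2) / i) ^ 2))⁻¹ *
        (cost μ + ENNReal.ofReal (Δ / i))) atTop (𝓝 ((ENNReal.ofReal 1)⁻¹ *
        (cost μ + ENNReal.ofReal 0))) := by
      have h1 : Tendsto (fun i : ℕ => (((i:ℝ) - 2) / i) ^ 2) atTop (𝓝 1) := by
        have h2 : Tendsto (fun i : ℕ => (1 - 2 / (i:ℝ)) ^ 2) atTop (𝓝 ((1 - 0) ^ 2)) :=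
          (tendsto_const_nhds.sub (tendsto_const_div_atTop_nhds_zero_nat 2)).pow 2
        rw [sub_zero, one_pow] at h2
        refine h2.congr' ?_
        filter_upwards [eventually_gt_atTop 0] with i hi
        have : (i:ℝ) ≠ 0 := by exact_mod_cast hi.ne'
        rw [sub_div, div_self this]
      have h3 := tendsto_const_div_atTop_nhds_zero_nat Δ
      refine ENNReal.Tendsto.mul (tendsto_inv_iff.2 (ENNReal.tendsto_ofReal h1)) ?_
        (tendsto_const_nhds.add (ENNReal.tendsto_ofReal h3)) ?_
      · left; simp
      · right; simp
    rw [ENNReal.ofReal_one, inv_one, one_mul, ENNReal.ofReal_zero, add_zero] at hlim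
    refine ge_of_tendsto hlim ?_
    filter_upwards [eventually_ge_atTop 3] with i hi
    exact main_step hΔ hμ i hi
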